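/- arXiv:1908.09420 — 2 statements merged into one kernel-verified Lean document; each statement's English description precedes it below -/
import Mathlib

section
/- Let N be an odd perfect number with at least three distinct prime divisors, and let a, b, c denote respectively its third largest, second largest, and largest prime divisors. Then either a < (2N)^(1/7), or all three of the following hold: a² ∥ N, b² ∥ N, and c ∥ N. -/
/-!
Write `v p` for the exponent of `p` in `N`, and let `a < b < c` be primes dividing `N`. The number
`m = a ^ v a * b ^ v b * c ^ v c` divides `σ N = 2 * N`, which is `σ m * S` for some `S`. If
`2 * N ≤ a ^ 7`, then `m * S ≤ a ^ 7`, so the exponents add up to at most 6 and `S` is small. As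
`4 ∤ σ N`, at most one exponent is odd, which leaves `(2, 2, 1)`, `(2, 2, 2)`, `(1, 2, 2)` and
`(2, 1, 2)`.

The case `(2, 2, 2)` is excluded by size and parity. In the other two, `c ^ 2 ∣ σ m * S` and the
smallness of `S` force `c ∣ x ^ 2 + x + 1`, with `x = b` or `x = a`. Together with the converse
divisibility `x ∣ c ^ 2 + c + 1`, Vieta jumping gives `x ^ 2 + c ^ 2 + x + c + 1 = 5 * x * c`, and
reducing this equation modulo `x` or `b` leaves only finitely many candidates.
-/

open scoped ArithmeticFunction.sigma

lemma coprime_sq_add_self_add_one (n : ℕ) : n.Coprime (n ^ 2 + n + 1) := by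
  rw [show n ^ 2 + n + 1 = 1 + n * (n + 1) by ring]
  simp

lemma odd_sq_add_self_add_one (n : ℕ) : Odd (n ^ 2 + n + 1) := by
  rw [show n ^ 2 + n + 1 = n * (n + 1) + 1 by ring]
  exact n.even_mul_succ_self.add_one

lemma sq_add_self_add_one_lt_sq {m n : ℕ} (hm : m ≠ 0) (hmn : m < n) : m ^ 2 + m + 1 < n ^ 2 := by
  have : 0 < m := by omega
  nlinarith

lemma mul_sq_add_self_add_one_lt {k n : ℕ} (hkn : k < n) :
    k * (n ^ 2 + n + 1) < (k + 1) * n ^ 2 := by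
  nlinarith

/-- The Vieta jump replaces `y` by the cofactor `z` of `y` in `x ^ 2 + x + 1`. -/
lemma dvd_sq_add_self_add_one_of_mul_eq {x y z : ℕ} (hx : x ∣ y ^ 2 + y + 1)
    (hyz : y * z = x ^ 2 + x + 1) : x ∣ z ^ 2 + z + 1 := by
  have hxy : x.Coprime (y ^ 2) :=
    ((coprime_sq_add_self_add_one y).coprime_dvd_right hx).symm.pow_right 2
  have expand : y ^ 2 * (z ^ 2 + z + 1) =
      x * ((x + 1) * (y * z + y + 1)) + (y ^ 2 + y + 1) := by
    linear_combination (y * z + y + 1) * hyz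
  refine hxy.dvd_of_dvd_mul_left ?_
  rw [expand]
  exact (dvd_mul_right _ _).add hx

theorem sq_add_sq_add_add_add_one_eq_five_mul {x y : ℕ} (hx : x ∣ y ^ 2 + y + 1)
    (hy : y ∣ x ^ 2 + x + 1) : x ^ 2 + y ^ 2 + x + y + 1 = 5 * (x * y) := by
  wlog hxy : x ≤ y generalizing x y
  · linarith [this hy hx (by omega)]
  induction y using Nat.strong_induction_on generalizing x with
  | _ y ih =>
    have hx0 : 0 < x := Nat.pos_of_dvd_of_pos hx (by positivity)
    rcases hxy.eq_or_lt with rfl | hlt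
    · obtain rfl : x = 1 := (coprime_sq_add_self_add_one x).eq_one_of_dvd hx
      norm_num
    · obtain ⟨z, hz⟩ := hy
      have hzx : z ≤ x := by
        by_contra! h
        nlinarith
      have jumped : z ^ 2 + x ^ 2 + z + x + 1 = 5 * (z * x) :=
        ih x hlt (Dvd.intro_left y hz.symm) (dvd_sq_add_self_add_one_of_mul_eq hx hz.symm) hzx
      have hz0 : 0 < z := Nat.pos_of_ne_zero (by rintro rfl; simp at hz)
      have other_root : z + 1 + y = 5 * x := by
        refine Nat.eq_of_mul_eq_mul_left hz0 ?_
        linarith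
      linear_combination y * other_root + hz

theorem not_sq_dvd_sq_add_self_add_one {b c : ℕ} (hb : 1 < b) (hc : c ∣ b ^ 2 + b + 1) :
    ¬ b ^ 2 ∣ c ^ 2 + c + 1 := by
  intro hsq
  have hbc : b ∣ c ^ 2 + c + 1 := (dvd_pow_self b two_ne_zero).trans hsq
  have key := sq_add_sq_add_add_add_one_eq_five_mul hbc hc
  zify at key hsq hbc
  have hb5 : (b : ℤ) ∣ 5 * c - 1 := by
    have : (b : ℤ) * b ∣ b * (5 * c - 1 - b) := by
      rw [← sq, show (b : ℤ) * (5 * c - 1 - b) = c ^ 2 + c + 1 by linarith]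
      exact hsq
    exact (dvd_sub_self_right).1 ((mul_dvd_mul_iff_left (by positivity)).1 this)
  have h31 : b ∣ 31 := by
    zify
    rw [show (31 : ℤ) = 25 * (c ^ 2 + c + 1) - (5 * c - 1) * (5 * c + 6) by ring]
    exact (hbc.mul_left _).sub (hb5.mul_right _)
  obtain rfl : b = 31 := ((Nat.dvd_prime (by norm_num)).1 h31).resolve_left hb.ne'
  have not_square : ¬ IsSquare (4936 : ℤ) := by norm_num
  refine not_square ⟨c - 77, ?_⟩
  push_cast at key
  linarith

/-- As `a * j ≡ 1` modulo `b`, multiplying the Vieta equation by `j ^ 2` eliminates `a`. -/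
lemma dvd_of_add_one_eq_mul {a b c j : ℕ} (hc : c ∣ a ^ 2 + a + 1) (ha : a ∣ c ^ 2 + c + 1)
    (hb : b ∣ c ^ 2 + c + 1) (hj : b + 1 = a * j) : b ∣ 31 * j ^ 2 + 7 * j + 1 := by
  have key := sq_add_sq_add_add_add_one_eq_five_mul ha hc
  zify at key hb hj ⊢
  have hbj : (b : ℤ) ∣ 5 * j * c - j - 1 := by
    rw [show (5 * j * c - j - 1 : ℤ) =
        j ^ 2 * (c ^ 2 + c + 1) - b * (5 * j * c - b - j - 2) by
      linear_combination (-(j : ℤ) ^ 2) * key + (5 * j * c - a * j - b - 1 - j) * hj]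
    exact (hb.mul_left _).sub (dvd_mul_right _ _)
  rw [show (31 * j ^ 2 + 7 * j + 1 : ℤ) =
      25 * j ^ 2 * (c ^ 2 + c + 1) - (5 * j * c - j - 1) * (5 * j * c + 6 * j + 1) by ring]
  exact (hb.mul_left _).sub (hbj.mul_right _)

theorem not_dvd_add_one_of_dvd_sq_add_self_add_one {a b c : ℕ} (hb : b.Prime) (ha1 : 1 < a)
    (hbc : b < c) (hca : c ∣ a ^ 2 + a + 1) (hac : a ∣ c ^ 2 + c + 1)
    (hbc' : b ∣ c ^ 2 + c + 1) : ¬ a ∣ b + 1 := by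
  rintro ⟨j, hj⟩
  have key := sq_add_sq_add_add_add_one_eq_five_mul hac hca
  have hj5 : j < 5 := by
    by_contra! h
    nlinarith
  have hdvd := dvd_of_add_one_eq_mul hca hac hbc' hj
  have ha_odd : Odd a := (odd_sq_add_self_add_one c).of_dvd_nat hac
  have hb_odd : Odd b := (odd_sq_add_self_add_one c).of_dvd_nat hbc'
  have hj_even : Even j := by
    have : Even (a * j) := hj ▸ hb_odd.add_one
    exact (Nat.even_mul.1 this).resolve_left (Nat.not_even_iff_odd.2 ha_odd)
  obtain rfl | rfl | rfl : j = 0 ∨ j = 2 ∨ j = 4 := by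
    obtain ⟨i, rfl⟩ := hj_even
    omega
  · omega
  · have hb139 : b = 139 :=
      (Nat.prime_dvd_prime_iff_eq hb (by norm_num)).1 (by simpa using hdvd)
    obtain ⟨i, rfl⟩ := ha_odd
    omega
  · have hb525 : b ∣ 3 * 5 ^ 2 * 7 := by simpa using hdvd
    have : b = 3 ∨ b = 5 ∨ b = 7 := by
      rcases hb.dvd_mul.1 hb525 with h35 | h7
      · rcases hb.dvd_mul.1 h35 with h3 | h5
        · exact .inl ((Nat.prime_dvd_prime_iff_eq hb Nat.prime_three).1 h3)
        · exact .inr (.inl (Nat.prime_eq_prime_of_dvd_pow hb Nat.prime_five h5))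
      · exact .inr (.inr ((Nat.prime_dvd_prime_iff_eq hb Nat.prime_seven).1 h7))
    obtain ⟨i, rfl⟩ := ha_odd
    omega

lemma not_sq_dvd_add_one_mul {a b c : ℕ} (ha : a.Prime) (hb : b.Prime) (hbc : b < c)
    (hb_lt : b + 1 < a ^ 2) (hca : c ∣ a ^ 2 + a + 1) (hbc' : b ∣ c ^ 2 + c + 1) :
    ¬ a ^ 2 ∣ (b + 1) * (c ^ 2 + c + 1) := by
  intro h
  by_cases hac : a ∣ c ^ 2 + c + 1
  · have hab' := not_dvd_add_one_of_dvd_sq_add_self_add_one hb ha.one_lt hbc hca hac hbc'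
    exact not_sq_dvd_sq_add_self_add_one ha.one_lt hca
      (((ha.coprime_iff_not_dvd.2 hab').pow_left 2).dvd_of_dvd_mul_left h)
  · exact Nat.not_dvd_of_pos_of_lt b.succ_pos hb_lt
      (((ha.coprime_iff_not_dvd.2 hac).pow_left 2).dvd_of_dvd_mul_right h)

lemma not_dvd_of_dvd_of_lt_mul {p q n : ℕ} (hpq : p.Coprime q) (hn0 : n ≠ 0) (hn : n < p * q)
    (hq : q ∣ n) : ¬ p ∣ n := fun hp =>
  hn.not_ge (Nat.le_of_dvd (Nat.pos_of_ne_zero hn0) (hpq.mul_dvd_of_dvd_of_dvd hp hq))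

lemma dvd_and_dvd_of_sq_dvd_mul {p m n : ℕ} (hp : p.Prime) (hm0 : m ≠ 0) (hn0 : n ≠ 0)
    (hm : m < p ^ 2) (hn : n < p ^ 2) (h : p ^ 2 ∣ m * n) : p ∣ m ∧ p ∣ n := by
  constructor <;> by_contra hndvd <;>
    have hcop := (hp.coprime_iff_not_dvd.2 hndvd).pow_left 2
  · exact Nat.not_dvd_of_pos_of_lt (Nat.pos_of_ne_zero hn0) hn (hcop.dvd_of_dvd_mul_left h)
  · exact Nat.not_dvd_of_pos_of_lt (Nat.pos_of_ne_zero hm0) hm (hcop.dvd_of_dvd_mul_right h)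

lemma coprime_add_one_of_lt {p q : ℕ} (hp : Odd p) (hq : q.Prime) (hq2 : Odd q) (hpq : p < q) :
    q.Coprime (p + 1) := by
  refine Nat.coprime_of_lt_prime p.succ_ne_zero ?_ hq
  obtain ⟨i, rfl⟩ := hp
  obtain ⟨j, rfl⟩ := hq2
  omega

section ExponentCases

variable {a b c S : ℕ}

lemma not_sq_mul_sq_mul_sq_dvd (ha : 1 < a) (hab : a < b) (hbc : b < c) :
    ¬ a ^ 2 * b ^ 2 * c ^ 2 ∣ (a ^ 2 + a + 1) * (b ^ 2 + b + 1) * (c ^ 2 + c + 1) := by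
  rintro ⟨k, hk⟩
  have hodd : Odd (a ^ 2 * b ^ 2 * c ^ 2 * k) := hk ▸
    ((odd_sq_add_self_add_one a).mul (odd_sq_add_self_add_one b)).mul (odd_sq_add_self_add_one c)
  simp only [Nat.odd_mul, Nat.odd_pow_iff two_ne_zero] at hodd
  obtain ⟨⟨⟨ha_odd, hb_odd⟩, hc_odd⟩, hk_odd⟩ := hodd
  -- `(n ^ 2 + n + 1) / n ^ 2 < (i + 1) / i` for `i < n`, and `3 / 2 * (5 / 4) * (7 / 6) < 3`.
  have hk_lt : k < 3 := by
    have h2a : 2 < a := by grind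
    have h4b : 4 < b := by grind
    have h6c : 6 < c := by grind
    have hsize := Nat.mul_lt_mul''
      (Nat.mul_lt_mul'' (mul_sq_add_self_add_one_lt h2a) (mul_sq_add_self_add_one_lt h4b))
      (mul_sq_add_self_add_one_lt h6c)
    refine Nat.lt_of_mul_lt_mul_left (a := 48 * (a ^ 2 * b ^ 2 * c ^ 2)) ?_
    calc 48 * (a ^ 2 * b ^ 2 * c ^ 2) * k
        = 2 * (a ^ 2 + a + 1) * (4 * (b ^ 2 + b + 1)) * (6 * (c ^ 2 + c + 1)) := by
          linarith
      _ < 3 * a ^ 2 * (5 * b ^ 2) * (7 * c ^ 2) := hsize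
      _ = 105 * (a ^ 2 * b ^ 2 * c ^ 2) := by ring
      _ ≤ 48 * (a ^ 2 * b ^ 2 * c ^ 2) * 3 := by omega
  have hk_gt : 1 < k := by
    refine Nat.lt_of_mul_lt_mul_left (a := a ^ 2 * b ^ 2 * c ^ 2) ?_
    rw [← hk, mul_one]
    gcongr <;> omega
  obtain ⟨i, rfl⟩ := hk_odd
  omega

lemma not_sq_mul_sq_dvd_mul (hb : b.Prime) (hc : c.Prime) (hbc : b < c) (hS0 : S ≠ 0)
    (hS : S < b ^ 2) : ¬ b ^ 2 * c ^ 2 ∣ (b ^ 2 + b + 1) * (c ^ 2 + c + 1) * S := by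
  intro h
  have hc_dvd : c ^ 2 ∣ (b ^ 2 + b + 1) * S := by
    refine ((coprime_sq_add_self_add_one c).pow_left 2).dvd_of_dvd_mul_right ?_
    rw [mul_right_comm]
    exact (dvd_mul_left _ _).trans h
  obtain ⟨hcb, hcS⟩ := dvd_and_dvd_of_sq_dvd_mul hc (by positivity) hS0
    (sq_add_self_add_one_lt_sq hb.ne_zero hbc) (hS.trans (by gcongr)) hc_dvd
  have hbS : ¬ b ∣ S := not_dvd_of_dvd_of_lt_mul ((Nat.coprime_primes hb hc).2 hbc.ne) hS0
    (by nlinarith) hcS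
  refine not_sq_dvd_sq_add_self_add_one hb.one_lt hcb ?_
  refine ((coprime_sq_add_self_add_one b).pow_left 2).dvd_of_dvd_mul_left ?_
  refine ((hb.coprime_iff_not_dvd.2 hbS).pow_left 2).dvd_of_dvd_mul_right ?_
  exact (dvd_mul_right _ _).trans h

lemma not_sq_mul_mul_sq_dvd_mul (ha : a.Prime) (hb : b.Prime) (hc : c.Prime) (hab : a < b)
    (hbc : b < c) (hS0 : S ≠ 0) (hS : S < a ^ 2) :
    ¬ a ^ 2 * b * c ^ 2 ∣ (a ^ 2 + a + 1) * (b + 1) * (c ^ 2 + c + 1) * S := by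
  intro h
  have hac := hab.trans hbc
  have hb_odd : Odd b := hb.odd_of_ne_two (ha.two_le.trans_lt hab).ne'
  have hc_odd : Odd c := hc.odd_of_ne_two (ha.two_le.trans_lt hac).ne'
  have hac_cop := (Nat.coprime_primes ha hc).2 hac.ne
  have hbc_cop := (Nat.coprime_primes hb hc).2 hbc.ne
  have hc_dvd : c ^ 2 ∣ (a ^ 2 + a + 1) * S := by
    refine ((coprime_add_one_of_lt hb_odd hc hc_odd hbc).pow_left 2).dvd_of_dvd_mul_right ?_
    refine ((coprime_sq_add_self_add_one c).pow_left 2).dvd_of_dvd_mul_right ?_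
    rw [mul_right_comm _ S (b + 1), mul_right_comm _ S]
    exact (dvd_mul_left _ _).trans h
  obtain ⟨hca, hcS⟩ := dvd_and_dvd_of_sq_dvd_mul hc (by positivity) hS0
    (sq_add_self_add_one_lt_sq ha.ne_zero hac) (hS.trans (by gcongr)) hc_dvd
  have haS : ¬ a ∣ S := not_dvd_of_dvd_of_lt_mul hac_cop hS0 (by nlinarith) hcS
  have hbS : ¬ b ∣ S := not_dvd_of_dvd_of_lt_mul hbc_cop hS0 (by nlinarith) hcS
  have hba : ¬ b ∣ a ^ 2 + a + 1 := not_dvd_of_dvd_of_lt_mul hbc_cop (by positivity)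
    ((sq_add_self_add_one_lt_sq ha.ne_zero hab).trans (by nlinarith)) hca
  have hbc' : b ∣ c ^ 2 + c + 1 := by
    refine (hb.coprime_iff_not_dvd.2 hba).mul_right (show b.Coprime (b + 1) by simp)
      |>.dvd_of_dvd_mul_left ?_
    refine (hb.coprime_iff_not_dvd.2 hbS).dvd_of_dvd_mul_right ?_
    exact ((dvd_mul_left _ _).mul_right _).trans h
  have ha_dvd : a ^ 2 ∣ (b + 1) * (c ^ 2 + c + 1) := by
    refine ((coprime_sq_add_self_add_one a).pow_left 2).dvd_of_dvd_mul_left ?_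
    refine ((ha.coprime_iff_not_dvd.2 haS).pow_left 2).dvd_of_dvd_mul_right ?_
    rw [← mul_assoc]
    exact ((dvd_mul_right _ _).mul_right _).trans h
  have hcS' := Nat.le_of_dvd (Nat.pos_of_ne_zero hS0) hcS
  exact not_sq_dvd_add_one_mul ha hb hbc (by omega) hca hbc' ha_dvd

lemma not_mul_sq_mul_sq_dvd_mul (ha : 1 < a) (ha2 : Odd a) (hb : b.Prime) (hc : c.Prime)
    (hab : a < b) (hbc : b < c) (hS0 : S ≠ 0) (hS : S < b ^ 2) :
    ¬ a * b ^ 2 * c ^ 2 ∣ (a + 1) * (b ^ 2 + b + 1) * (c ^ 2 + c + 1) * S := by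
  intro h
  have hcop {p : ℕ} (hp : p.Prime) (hap : a < p) : (p ^ 2).Coprime (a + 1) :=
    (coprime_add_one_of_lt ha2 hp (hp.odd_of_ne_two (by omega)) hap).pow_left 2
  refine not_sq_mul_sq_dvd_mul hb hc hbc hS0 hS ?_
  refine ((hcop hb hab).mul_left (hcop hc (hab.trans hbc))).dvd_of_dvd_mul_left ?_
  rw [← mul_assoc, ← mul_assoc]
  exact (Dvd.intro_left a (mul_assoc _ _ _).symm).trans h

end ExponentCases

lemma prod_apply_prime_pow_dvd_apply {R : Type*} [CommMonoidWithZero R] {f : ArithmeticFunction R}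
    (hf : f.IsMultiplicative) {n : ℕ} (hn : n ≠ 0) {s : Finset ℕ} (hs : s ⊆ n.primeFactors) :
    ∏ p ∈ s, f (p ^ n.factorization p) ∣ f n := by
  rw [hf.multiplicative_factorization f hn]
  exact Finset.prod_dvd_prod_of_subset _ _ _ hs

lemma prod_prime_pow_factorization_dvd {n : ℕ} (hn : n ≠ 0) {s : Finset ℕ}
    (hs : s ⊆ n.primeFactors) : ∏ p ∈ s, p ^ n.factorization p ∣ n := by
  simpa using prod_apply_prime_pow_dvd_apply ArithmeticFunction.isMultiplicative_id hn hs

lemma le_sigma_one (n : ℕ) : n ≤ σ 1 n := by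
  rcases eq_or_ne n 0 with rfl | hn
  · exact Nat.zero_le _
  · rw [ArithmeticFunction.sigma_one_apply]
    exact Finset.single_le_sum (f := id) (fun _ _ => Nat.zero_le _) (Nat.mem_divisors_self n hn)

lemma sigma_one_prime {p : ℕ} (hp : p.Prime) : σ 1 p = p + 1 := by
  rw [ArithmeticFunction.sigma_one_apply, hp.sum_divisors, add_comm]

lemma sigma_one_prime_sq {p : ℕ} (hp : p.Prime) : σ 1 (p ^ 2) = p ^ 2 + p + 1 := by
  rw [ArithmeticFunction.sigma_one_apply_prime_pow hp]
  simp only [Finset.sum_range_succ, Finset.range_zero, Finset.sum_empty]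
  ring

lemma even_sigma_one_prime_pow {p k : ℕ} (hp : p.Prime) (hp2 : Odd p) (hk : Odd k) :
    Even (σ 1 (p ^ k)) := by
  rw [ArithmeticFunction.sigma_one_apply_prime_pow hp, Finset.even_sum_iff_even_card_odd,
    Finset.filter_true_of_mem fun i _ => hp2.pow, Finset.card_range]
  exact hk.add_one

lemma sigma_one_eq_two_mul_of_perfect {n : ℕ} (hn : n.Perfect) : σ 1 n = 2 * n := by
  rw [ArithmeticFunction.sigma_one_apply]
  exact (Nat.perfect_iff_sum_divisors_eq_two_mul hn.2).1 hn

lemma not_odd_and_odd_factorization_of_perfect {n p q : ℕ} (hodd : Odd n) (hn : n.Perfect)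
    (hp : p ∈ n.primeFactors) (hq : q ∈ n.primeFactors) (hpq : p ≠ q) :
    ¬ (Odd (n.factorization p) ∧ Odd (n.factorization q)) := by
  rintro ⟨hp_exp, hq_exp⟩
  have even_of_mem {r : ℕ} (hr : r ∈ n.primeFactors) (hr_exp : Odd (n.factorization r)) :
      2 ∣ σ 1 (r ^ n.factorization r) :=
    (even_sigma_one_prime_pow (Nat.prime_of_mem_primeFactors hr)
      (hodd.of_dvd_nat (Nat.dvd_of_mem_primeFactors hr)) hr_exp).two_dvd
  have hdvd : σ 1 (p ^ n.factorization p) * σ 1 (q ^ n.factorization q) ∣ σ 1 n := by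
    simpa only [Finset.prod_pair hpq] using
      prod_apply_prime_pow_dvd_apply ArithmeticFunction.isMultiplicative_sigma hn.2.ne'
        (Finset.insert_subset hp (Finset.singleton_subset_iff.2 hq))
  have hfour : 2 * 2 ∣ 2 * n := by
    rw [← sigma_one_eq_two_mul_of_perfect hn]
    exact (mul_dvd_mul (even_of_mem hp hp_exp) (even_of_mem hq hq_exp)).trans hdvd
  exact hodd.not_two_dvd_nat ((mul_dvd_mul_iff_left two_ne_zero).1 hfour)

lemma exponent_cases {α β γ : ℕ} (hα : α ≠ 0) (hβ : β ≠ 0) (hγ : γ ≠ 0) (hsum : α + β + γ < 7)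
    (hαβ : ¬ (Odd α ∧ Odd β)) (hαγ : ¬ (Odd α ∧ Odd γ)) (hβγ : ¬ (Odd β ∧ Odd γ)) :
    (α = 2 ∧ β = 2 ∧ γ = 1) ∨ (α = 2 ∧ β = 2 ∧ γ = 2) ∨
      (α = 1 ∧ β = 2 ∧ γ = 2) ∨ (α = 2 ∧ β = 1 ∧ γ = 2) := by
  grind

theorem exponents_eq_of_dvd_sigma_mul {a b c α β γ S : ℕ} (ha : a.Prime) (hb : b.Prime)
    (hc : c.Prime) (ha2 : Odd a) (hab : a < b) (hbc : b < c) (hα : α ≠ 0) (hβ : β ≠ 0) (hγ : γ ≠ 0)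
    (hαβ : ¬ (Odd α ∧ Odd β)) (hαγ : ¬ (Odd α ∧ Odd γ)) (hβγ : ¬ (Odd β ∧ Odd γ)) (hS0 : S ≠ 0)
    (hle : a ^ α * b ^ β * c ^ γ * S ≤ a ^ 7)
    (hdvd : a ^ α * b ^ β * c ^ γ ∣ σ 1 (a ^ α) * σ 1 (b ^ β) * σ 1 (c ^ γ) * S) :
    α = 2 ∧ β = 2 ∧ γ = 1 := by
  have hac := hab.trans hbc
  have hlt : a ^ (α + β + γ) * S < a ^ 7 := by
    have := ha.pos
    calc a ^ (α + β + γ) * S = a ^ α * a ^ β * a ^ γ * S := by ring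
      _ < a ^ α * b ^ β * c ^ γ * S := by gcongr
      _ ≤ a ^ 7 := hle
  have hsum : α + β + γ < 7 := (Nat.pow_lt_pow_iff_right ha.one_lt).1
    ((Nat.le_mul_of_pos_right _ (Nat.pos_of_ne_zero hS0)).trans_lt hlt)
  have hS {k : ℕ} (hk : α + β + γ + k = 7) : S < a ^ k := by
    rw [← hk, pow_add a (α + β + γ) k] at hlt
    exact Nat.lt_of_mul_lt_mul_left hlt
  rcases exponent_cases hα hβ hγ hsum hαβ hαγ hβγ with
    h | ⟨rfl, rfl, rfl⟩ | ⟨rfl, rfl, rfl⟩ | ⟨rfl, rfl, rfl⟩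
  · exact h
  · rw [sigma_one_prime_sq ha, sigma_one_prime_sq hb, sigma_one_prime_sq hc] at hdvd
    have hSa : S < a := by simpa using hS (k := 1) rfl
    have hcop {p : ℕ} (hp : p.Prime) (hap : a ≤ p) : (p ^ 2).Coprime S :=
      (Nat.coprime_of_lt_prime hS0 (hSa.trans_le hap) hp).pow_left 2
    exact (not_sq_mul_sq_mul_sq_dvd ha.one_lt hab hbc
      ((((hcop ha le_rfl).mul_left (hcop hb hab.le)).mul_left
        (hcop hc hac.le)).dvd_of_dvd_mul_right hdvd)).elim
  · rw [pow_one, sigma_one_prime ha, sigma_one_prime_sq hb, sigma_one_prime_sq hc] at hdvd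
    have hSb : S < b ^ 2 := (hS rfl).trans (by gcongr)
    exact (not_mul_sq_mul_sq_dvd_mul ha.one_lt ha2 hb hc hab hbc hS0 hSb hdvd).elim
  · rw [pow_one, sigma_one_prime_sq ha, sigma_one_prime hb, sigma_one_prime_sq hc] at hdvd
    exact (not_sq_mul_mul_sq_dvd_mul ha hb hc hab hbc hS0 (hS rfl) hdvd).elim

lemma lt_of_card_filter_lt_card_filter {ι : Type*} [LinearOrder ι] {s : Finset ι} {x y : ι}
    (h : (s.filter (y < ·)).card < (s.filter (x < ·)).card) : x < y := by
  by_contra! hyx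
  exact h.not_ge
    (Finset.card_le_card (Finset.monotone_filter_right s fun _ _ hq => hyx.trans_lt hq))

theorem exponents_eq_of_perfect {N a b c : ℕ} (hodd : Odd N) (hperf : N.Perfect)
    (ha : a ∈ N.primeFactors) (hb : b ∈ N.primeFactors) (hc : c ∈ N.primeFactors) (hab : a < b)
    (hbc : b < c) (hle : 2 * N ≤ a ^ 7) :
    N.factorization a = 2 ∧ N.factorization b = 2 ∧ N.factorization c = 1 := by
  have hN0 : N ≠ 0 := hperf.2.ne'
  have hac := hab.trans hbc
  have hs : {a, b, c} ⊆ N.primeFactors := by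
    simp only [Finset.insert_subset_iff, Finset.singleton_subset_iff, ha, hb, hc, and_self]
  have hprod (f : ℕ → ℕ) : ∏ p ∈ {a, b, c}, f p = f a * f b * f c := by
    rw [Finset.prod_insert (by simp [hab.ne, hac.ne]), Finset.prod_pair hbc.ne, mul_assoc]
  have hdvd := prod_prime_pow_factorization_dvd hN0 hs
  obtain ⟨S, hS⟩ := prod_apply_prime_pow_dvd_apply
    (ArithmeticFunction.isMultiplicative_sigma (k := 1)) hN0 hs
  rw [hprod] at hdvd hS
  rw [sigma_one_eq_two_mul_of_perfect hperf] at hS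
  have exp_ne_zero {p : ℕ} (hp : p ∈ N.primeFactors) : N.factorization p ≠ 0 :=
    Finsupp.mem_support_iff.1 (N.support_factorization ▸ hp)
  refine exponents_eq_of_dvd_sigma_mul (S := S) (Nat.prime_of_mem_primeFactors ha)
    (Nat.prime_of_mem_primeFactors hb) (Nat.prime_of_mem_primeFactors hc)
    (hodd.of_dvd_nat (Nat.dvd_of_mem_primeFactors ha)) hab hbc
    (exp_ne_zero ha) (exp_ne_zero hb) (exp_ne_zero hc)
    (not_odd_and_odd_factorization_of_perfect hodd hperf ha hb hab.ne)
    (not_odd_and_odd_factorization_of_perfect hodd hperf ha hc hac.ne)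
    (not_odd_and_odd_factorization_of_perfect hodd hperf hb hc hbc.ne) ?_ ?_ ?_
  · rintro rfl
    omega
  · refine le_trans ?_ (hS ▸ hle)
    gcongr <;> exact le_sigma_one _
  · exact hS ▸ hdvd.mul_left 2

theorem stmt_16_general {N a b c : ℕ} (hodd : Odd N) (hperf : N.Perfect)
    (ha : a ∈ N.primeFactors) (hb : b ∈ N.primeFactors) (hc : c ∈ N.primeFactors) (hab : a < b)
    (hbc : b < c) :
    a ^ 7 < 2 * N ∨
      ((a ^ 2 ∣ N ∧ ¬ a ^ 3 ∣ N) ∧ (b ^ 2 ∣ N ∧ ¬ b ^ 3 ∣ N) ∧ (c ∣ N ∧ ¬ c ^ 2 ∣ N)) := by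
  refine or_iff_not_imp_left.2 fun hlt => ?_
  obtain ⟨hva, hvb, hvc⟩ :=
    exponents_eq_of_perfect hodd hperf ha hb hc hab hbc (not_lt.1 hlt)
  have pow_dvd {p : ℕ} (hp : p ∈ N.primeFactors) (k : ℕ) :
      p ^ k ∣ N ↔ k ≤ N.factorization p :=
    (Nat.prime_of_mem_primeFactors hp).pow_dvd_iff_le_factorization hperf.2.ne'
  have hcN := Nat.dvd_of_mem_primeFactors hc
  simp [pow_dvd ha, pow_dvd hb, pow_dvd hc, hva, hvb, hvc, hcN]

/-- Let N be an odd perfect number with at least three distinct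
prime divisors, with c, b, a its largest, second largest and third largest
prime divisors. Then either a < (2N)^(1/7) (i.e., a^7 < 2N), or all of
a² ∥ N, b² ∥ N, and c ∥ N hold. -/
theorem stmt_16 (N : ℕ) (hodd : Odd N) (hperf : Nat.Perfect N)
    (hk : 3 ≤ N.primeFactors.card)
    (a b c : ℕ)
    (ha : a ∈ N.primeFactors) (hb : b ∈ N.primeFactors) (hc : c ∈ N.primeFactors)
    (ha2 : (N.primeFactors.filter (fun q => a < q)).card = 2)
    (hb1 : (N.primeFactors.filter (fun q => b < q)).card = 1)
    (hc0 : (N.primeFactors.filter (fun q => c < q)).card = 0) :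
    a ^ 7 < 2 * N ∨
      ((a ^ 2 ∣ N ∧ ¬ a ^ 3 ∣ N) ∧ (b ^ 2 ∣ N ∧ ¬ b ^ 3 ∣ N) ∧
        (c ∣ N ∧ ¬ c ^ 2 ∣ N)) := by
  exact stmt_16_general hodd hperf ha hb hc
    (lt_of_card_filter_lt_card_filter (by rw [ha2, hb1]; norm_num))
    (lt_of_card_filter_lt_card_filter (by rw [hb1, hc0]; norm_num))
end

section
/- Let N be an odd perfect number with at least two distinct prime divisors, and let b and c denote respectively its second largest and largest prime divisors. If b² ∥ N and c² ∥ N, then bc ≤ 2 · 3^(1/3) · N^(5/12). -/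
/-!
Write `N = b² cᵉ m` with `b < c` primes not dividing `m`, and suppose that `c²` divides
`σ(N) = σ(b²) σ(cᵉ) σ(m)`. Here `σ(cᵉ) ≡ 1 (mod c)` and `0 < σ(b²) = b² + b + 1 < c²`, so `c²`
cannot divide the product of the first two factors. Hence `c ∣ σ(m)`, so `c ≤ σ(m)` and, if `e ≥ 2`,
`b² c³ ≤ b² cᵉ σ(m) ≤ σ(N)`. Since `b < c`, this gives `(bc)⁵ ≤ (b² c³)² ≤ σ(N)²`; for perfect `N`,
it says `bc ≤ (2N)^(2/5)`.
-/

open scoped ArithmeticFunction.sigma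

section Sigma

variable {k n p q b c e i j m N : ℕ}

theorem pow_le_sigma (k : ℕ) (hn : n ≠ 0) : n ^ k ≤ σ k n := by
  rw [ArithmeticFunction.sigma_apply]
  exact Finset.single_le_sum (f := (· ^ k)) (fun _ _ ↦ Nat.zero_le _) (Nat.mem_divisors_self n hn)

theorem coprime_sigma_prime_pow (hp : p.Prime) (hk : k ≠ 0) (e : ℕ) : p.Coprime (σ k (p ^ e)) := by
  rw [ArithmeticFunction.sigma_apply_prime_pow hp, Finset.sum_range_succ', hp.coprime_iff_not_dvd,
    zero_mul, pow_zero, Nat.dvd_add_right (Finset.dvd_sum fun j _ ↦ dvd_pow_self p (by positivity))]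
  exact hp.not_dvd_one

theorem sigma_one_prime_sq_lt_sq (hb : b.Prime) (hbc : b < c) : σ 1 (b ^ 2) < c ^ 2 :=
  calc σ 1 (b ^ 2) = b ^ 2 + b + 1 := by
        rw [ArithmeticFunction.sigma_one_apply_prime_pow hb, Finset.sum_range_succ,
          Finset.sum_range_succ, Finset.sum_range_one]
        ring
    _ < (b + 1) ^ 2 := by linarith [hb.pos, add_sq b 1]
    _ ≤ c ^ 2 := by gcongr; exact hbc

theorem sigma_prime_pow_mul_prime_pow_mul (hp : p.Prime) (hq : q.Prime) (hpq : p ≠ q)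
    (hpm : ¬ p ∣ m) (hqm : ¬ q ∣ m) :
    σ k (p ^ i * q ^ j * m) = σ k (p ^ i) * σ k (q ^ j) * σ k m := by
  have hpq_coprime : (p ^ i).Coprime (q ^ j) := ((Nat.coprime_primes hp hq).2 hpq).pow i j
  have hm_coprime : (p ^ i * q ^ j).Coprime m :=
    ((hp.coprime_iff_not_dvd.2 hpm).pow_left i).mul_left ((hq.coprime_iff_not_dvd.2 hqm).pow_left j)
  rw [ArithmeticFunction.isMultiplicative_sigma.map_mul_of_coprime hm_coprime,
    ArithmeticFunction.isMultiplicative_sigma.map_mul_of_coprime hpq_coprime]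

theorem dvd_of_pow_dvd_mul_sigma_prime_pow_mul (hp : p.Prime) (hk : k ≠ 0) (hm : m ≠ 0)
    (hmp : m < p ^ i) (hdvd : p ^ i ∣ m * σ k (p ^ e) * n) : p ∣ n := by
  by_contra hpn
  have hcoprime_n : (p ^ i).Coprime n := (hp.coprime_iff_not_dvd.2 hpn).pow_left i
  have hcoprime_sigma : (p ^ i).Coprime (σ k (p ^ e)) :=
    (coprime_sigma_prime_pow hp hk e).pow_left i
  have hdvd_m : p ^ i ∣ m :=
    hcoprime_sigma.dvd_of_dvd_mul_right (hcoprime_n.dvd_of_dvd_mul_right hdvd)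
  exact hmp.not_ge (Nat.le_of_dvd (Nat.pos_of_ne_zero hm) hdvd_m)

theorem exists_eq_prime_pow_mul_prime_pow_mul (hp : p.Prime) (hq : q.Prime) (hpq : p ≠ q)
    (hpN : p ^ i ∣ N ∧ ¬ p ^ (i + 1) ∣ N) (hqN : q ^ j ∣ N) :
    ∃ e m, j ≤ e ∧ ¬ p ∣ m ∧ ¬ q ∣ m ∧ N = p ^ i * q ^ e * m := by
  have hN : N ≠ 0 := fun h ↦ hpN.2 (h ▸ dvd_zero _)
  obtain ⟨e, n, hqn, rfl⟩ := Nat.exists_eq_pow_mul_and_not_dvd hN q hq.ne_one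
  obtain ⟨m, rfl⟩ : p ^ i ∣ n :=
    (((Nat.coprime_primes hp hq).2 hpq).pow i e).dvd_of_dvd_mul_left hpN.1
  refine ⟨e, m, ?_, ?_, fun h ↦ hqn (h.mul_left _), by ring⟩
  · have hcoprime : (q ^ j).Coprime (p ^ i * m) := (hq.coprime_iff_not_dvd.2 hqn).pow_left j
    exact (Nat.pow_dvd_pow_iff_le_right hq.one_lt).1 (hcoprime.dvd_of_dvd_mul_right hqN)
  · rintro ⟨l, rfl⟩
    exact hpN.2 ⟨q ^ e * l, by ring⟩

theorem sq_mul_cube_le_sigma_one (hb : b.Prime) (hc : c.Prime) (hbc : b < c)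
    (hbN : b ^ 2 ∣ N ∧ ¬ b ^ 3 ∣ N) (hcN : c ^ 2 ∣ N) (hdvd : c ^ 2 ∣ σ 1 N) :
    b ^ 2 * c ^ 3 ≤ σ 1 N := by
  obtain ⟨e, m, he, hbm, hcm, rfl⟩ := exists_eq_prime_pow_mul_prime_pow_mul hb hc hbc.ne hbN hcN
  rw [sigma_prime_pow_mul_prime_pow_mul hb hc hbc.ne hbm hcm] at hdvd ⊢
  have hm : m ≠ 0 := fun h ↦ hbm (h ▸ dvd_zero b)
  have hb_sigma : σ 1 (b ^ 2) ≠ 0 :=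
    (ArithmeticFunction.sigma_pos 1 _ (pow_ne_zero 2 hb.ne_zero)).ne'
  have hc_dvd : c ∣ σ 1 m :=
    dvd_of_pow_dvd_mul_sigma_prime_pow_mul hc one_ne_zero hb_sigma
      (sigma_one_prime_sq_lt_sq hb hbc) hdvd
  have hc_le : c ≤ σ 1 m := Nat.le_of_dvd (ArithmeticFunction.sigma_pos 1 m hm) hc_dvd
  calc b ^ 2 * c ^ 3 = b ^ 2 * c ^ 2 * c := by ring
    _ ≤ b ^ 2 * c ^ e * σ 1 m := by gcongr; exact hc.pos
    _ ≤ σ 1 (b ^ 2) * σ 1 (c ^ e) * σ 1 m := by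
      gcongr
      · simpa only [pow_one] using pow_le_sigma 1 (pow_ne_zero 2 hb.ne_zero)
      · simpa only [pow_one] using pow_le_sigma 1 (pow_ne_zero e hc.ne_zero)

end Sigma

theorem mul_le_rpow_two_fifths {x y s : ℝ} (hx : 0 ≤ x) (hxy : x ≤ y) (hs : x ^ 2 * y ^ 3 ≤ s) :
    x * y ≤ s ^ (2 / 5 : ℝ) := by
  have hy : 0 ≤ y := hx.trans hxy
  have hs0 : 0 ≤ s := le_trans (by positivity) hs
  refine le_of_pow_le_pow_left₀ (n := 5) (by norm_num) (by positivity) ?_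
  calc (x * y) ^ 5 = x ^ 4 * y ^ 5 * x := by ring
    _ ≤ x ^ 4 * y ^ 5 * y := by gcongr
    _ = (x ^ 2 * y ^ 3) ^ 2 := by ring
    _ ≤ s ^ 2 := by gcongr
    _ = (s ^ (2 / 5 : ℝ)) ^ 5 := by
      rw [← Real.rpow_mul_natCast hs0, ← Real.rpow_natCast]
      norm_num

theorem mul_le_sigma_one_rpow_two_fifths {N b c : ℕ} (hb : b.Prime) (hc : c.Prime) (hbc : b < c)
    (hbN : b ^ 2 ∣ N ∧ ¬ b ^ 3 ∣ N) (hcN : c ^ 2 ∣ N) (hdvd : c ^ 2 ∣ σ 1 N) :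
    (b * c : ℝ) ≤ (σ 1 N : ℝ) ^ (2 / 5 : ℝ) :=
  mul_le_rpow_two_fifths b.cast_nonneg (by exact_mod_cast hbc.le)
    (by exact_mod_cast sq_mul_cube_le_sigma_one hb hc hbc hbN hcN hdvd)

theorem two_mul_rpow_two_fifths_le {x : ℝ} (hx : 1 ≤ x) :
    (2 * x) ^ (2 / 5 : ℝ) ≤ 2 * (3 : ℝ) ^ ((1 : ℝ) / 3) * x ^ ((5 : ℝ) / 12) := by
  have htwo : (2 : ℝ) ^ (2 / 5 : ℝ) ≤ 2 := Real.rpow_le_self_of_one_le (by norm_num) (by norm_num)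
  have hthree : 1 ≤ (3 : ℝ) ^ ((1 : ℝ) / 3) := Real.one_le_rpow (by norm_num) (by norm_num)
  calc (2 * x) ^ (2 / 5 : ℝ) = 2 ^ (2 / 5 : ℝ) * x ^ (2 / 5 : ℝ) :=
        Real.mul_rpow (by norm_num) (by positivity)
    _ ≤ (2 * 3 ^ ((1 : ℝ) / 3)) * x ^ ((5 : ℝ) / 12) := by
      gcongr ?_ * ?_
      · linarith
      · exact Real.rpow_le_rpow_of_exponent_le hx (by norm_num)

theorem lt_of_card_filter_lt {α : Type*} [LinearOrder α] {s : Finset α} {a b : α}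
    (h : (s.filter (b < ·)).card < (s.filter (a < ·)).card) : a < b := by
  by_contra! hba
  exact h.not_ge (Finset.card_le_card (Finset.monotone_filter_right s fun _ _ ↦ hba.trans_lt))

theorem stmt_17_general {N b c : ℕ} (hperf : N.Perfect) (hb : b.Prime) (hc : c.Prime) (hbc : b < c)
    (hbN : b ^ 2 ∣ N ∧ ¬ b ^ 3 ∣ N) (hcN : c ^ 2 ∣ N) :
    (b * c : ℝ) ≤ (2 * N : ℝ) ^ (2 / 5 : ℝ) := by
  have hσ : σ 1 N = 2 * N := by
    rw [ArithmeticFunction.sigma_one_apply,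
      (Nat.perfect_iff_sum_divisors_eq_two_mul hperf.2).1 hperf]
  have hdvd : c ^ 2 ∣ σ 1 N := hσ ▸ hcN.mul_left 2
  exact_mod_cast hσ ▸ mul_le_sigma_one_rpow_two_fifths hb hc hbc hbN hcN hdvd

/-- Let N be an odd perfect number with at least two distinct
prime divisors, with c its largest and b its second largest prime divisor.
If b² ∥ N and c² ∥ N, then bc ≤ 2 · 3^(1/3) · N^(5/12). -/
theorem stmt_17 (N : ℕ) (hodd : Odd N) (hperf : Nat.Perfect N)
    (hk : 2 ≤ N.primeFactors.card)
    (b c : ℕ)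
    (hb : b ∈ N.primeFactors) (hc : c ∈ N.primeFactors)
    (hb1 : (N.primeFactors.filter (fun q => b < q)).card = 1)
    (hc0 : (N.primeFactors.filter (fun q => c < q)).card = 0)
    (hbN : b ^ 2 ∣ N ∧ ¬ b ^ 3 ∣ N)
    (hcN : c ^ 2 ∣ N ∧ ¬ c ^ 3 ∣ N) :
    (b * c : ℝ) ≤ 2 * (3 : ℝ) ^ ((1 : ℝ) / 3) * (N : ℝ) ^ ((5 : ℝ) / 12) := by
  have hbc : b < c := lt_of_card_filter_lt (by rw [hb1, hc0]; exact one_pos)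
  exact (stmt_17_general hperf (Nat.prime_of_mem_primeFactors hb) (Nat.prime_of_mem_primeFactors hc)
    hbc hbN hcN.1).trans (two_mul_rpow_two_fifths_le (by exact_mod_cast hperf.2))
end
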